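/- arXiv:0801.4524 — 2 statements merged into one kernel-verified Lean document; each statement's English description precedes it below -/
import Mathlib

section
/- Let V be a quiver and x a vertex of V. Call a path p from x to x in V primitive if p is not the empty path and, whenever p is written as the composite q.comp r of two paths q, r from x to x, either q or r is the empty path. Then every path p from x to x in V admits a unique factorization into primitive loops: there exists a unique (possibly empty) finite list [p₁, …, p_k] of primitive paths from x to x such that p equals the composite p₁.comp p₂ … .comp p_k (the empty list corresponding to the empty path). -/
/-!
Paths satisfy Levi's lemma: if `p.comp r = q.comp s`, then one of `p`, `q` is a prefix of the other.
For primitive loops `p` and `q` the complementary factor is a loop, hence empty, so `p = q`. The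
first primitive factor of a loop is therefore determined by the loop, and left cancellation gives
uniqueness. A loop that is neither empty nor primitive splits into two strictly shorter loops, which
gives existence.
-/

universe v u

/-- The composite of a list of loops at `x`, the empty list giving the empty path,
and `[p₁, …, p_k]` giving `p₁.comp p₂ … .comp p_k`. -/
def composeLoopList {V : Type u} [Quiver.{v + 1} V] {x : V} :
    List (Quiver.Path x x) → Quiver.Path x x
  | [] => Quiver.Path.nil
  | q :: L => q.comp (composeLoopList L)

/-- A loop `p` at `x` is primitive if it is not the empty path and whenever
`p = q.comp r` for loops `q, r` at `x`, either `q` or `r` is the empty path. -/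
def PrimitiveLoop {V : Type u} [Quiver.{v + 1} V] {x : V} (p : Quiver.Path x x) : Prop :=
  p ≠ Quiver.Path.nil ∧
    ∀ q r : Quiver.Path x x, p = q.comp r →
      q = Quiver.Path.nil ∨ r = Quiver.Path.nil

section Paths

variable {V : Type*} [Quiver V] {a b c d : V}

theorem path_comp_eq_comp_iff {p : Quiver.Path a b} {r : Quiver.Path b d} {q : Quiver.Path a c}
    {s : Quiver.Path c d} :
    p.comp r = q.comp s ↔
      (∃ t : Quiver.Path b c, q = p.comp t ∧ r = t.comp s) ∨
        ∃ t : Quiver.Path c b, p = q.comp t ∧ s = t.comp r := by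
  constructor
  · intro h
    induction r with
    | nil => exact Or.inr ⟨s, h, rfl⟩
    | cons r e ih =>
      cases s with
      | nil => exact Or.inl ⟨r.cons e, h.symm, rfl⟩
      | cons s f =>
        simp only [Quiver.Path.comp_cons, Quiver.Path.cons.injEq] at h
        obtain ⟨rfl, hcomp, hef⟩ := h
        obtain rfl := eq_of_heq hef
        rcases ih (eq_of_heq hcomp) with ⟨t, rfl, rfl⟩ | ⟨t, rfl, rfl⟩
        · exact Or.inl ⟨t, rfl, rfl⟩
        · exact Or.inr ⟨t, rfl, rfl⟩
  · rintro (⟨t, rfl, rfl⟩ | ⟨t, rfl, rfl⟩)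
    · exact (Quiver.Path.comp_assoc p t s).symm
    · exact Quiver.Path.comp_assoc q t r

end Paths

section Loops

variable {V : Type u} [Quiver.{v + 1} V] {x y : V}

theorem PrimitiveLoop.eq_of_comp_eq_comp {p q : Quiver.Path x x} (hp : PrimitiveLoop p)
    (hq : PrimitiveLoop q) {r s : Quiver.Path x y} (h : p.comp r = q.comp s) : p = q := by
  rcases path_comp_eq_comp_iff.1 h with ⟨t, hqt, -⟩ | ⟨t, hpt, -⟩
  · have ht : t = Quiver.Path.nil := (hq.2 p t hqt).resolve_left hp.1
    rw [hqt, ht, Quiver.Path.comp_nil]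
  · have ht : t = Quiver.Path.nil := (hp.2 q t hpt).resolve_left hq.1
    rw [hpt, ht, Quiver.Path.comp_nil]

theorem exists_eq_comp_of_not_primitiveLoop {p : Quiver.Path x x} (hnil : p ≠ Quiver.Path.nil)
    (hp : ¬PrimitiveLoop p) :
    ∃ q r : Quiver.Path x x, p = q.comp r ∧ q.length < p.length ∧ r.length < p.length := by
  obtain ⟨q, r, rfl, hq, hr⟩ : ∃ q r : Quiver.Path x x,
      p = q.comp r ∧ q ≠ Quiver.Path.nil ∧ r ≠ Quiver.Path.nil := by
    simpa [PrimitiveLoop, hnil] using hp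
  rw [Ne, ← Quiver.Path.length_eq_zero_iff] at hq hr
  refine ⟨q, r, rfl, ?_, ?_⟩ <;> rw [Quiver.Path.length_comp] <;> lia

@[elab_as_elim]
theorem loop_induction_on_primitive {motive : Quiver.Path x x → Prop}
    (nil : motive Quiver.Path.nil) (primitive : ∀ p, PrimitiveLoop p → motive p)
    (comp : ∀ q r, motive q → motive r → motive (q.comp r)) (p : Quiver.Path x x) :
    motive p := by
  induction hn : p.length using Nat.strong_induction_on generalizing p with
  | h n ih =>
    subst hn
    by_cases hnil : p = Quiver.Path.nil
    · exact hnil ▸ nil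
    by_cases hp : PrimitiveLoop p
    · exact primitive p hp
    obtain ⟨q, r, rfl, hq, hr⟩ := exists_eq_comp_of_not_primitiveLoop hnil hp
    exact comp q r (ih _ hq q rfl) (ih _ hr r rfl)

theorem composeLoopList_append (L M : List (Quiver.Path x x)) :
    composeLoopList (L ++ M) = (composeLoopList L).comp (composeLoopList M) := by
  induction L with
  | nil => exact (Quiver.Path.nil_comp _).symm
  | cons q L ih => simp only [List.cons_append, composeLoopList, ih, Quiver.Path.comp_assoc]

theorem composeLoopList_eq_nil_iff {L : List (Quiver.Path x x)} :
    composeLoopList L = Quiver.Path.nil ↔ ∀ q ∈ L, q = Quiver.Path.nil := by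
  induction L with
  | nil => simp [composeLoopList]
  | cons q L ih =>
    rw [composeLoopList, Quiver.Path.comp_eq_nil_iff, Quiver.Path.length_eq_zero_iff,
      Quiver.Path.length_eq_zero_iff, ih, List.forall_mem_cons]

theorem eq_nil_of_composeLoopList_eq_nil {L : List (Quiver.Path x x)}
    (hL : ∀ q ∈ L, PrimitiveLoop q) (h : composeLoopList L = Quiver.Path.nil) : L = [] :=
  List.eq_nil_iff_forall_not_mem.2 fun q hq => (hL q hq).1 (composeLoopList_eq_nil_iff.1 h q hq)

theorem exists_primitive_factorization (p : Quiver.Path x x) :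
    ∃ L : List (Quiver.Path x x), (∀ q ∈ L, PrimitiveLoop q) ∧ p = composeLoopList L := by
  induction p using loop_induction_on_primitive with
  | nil => exact ⟨[], List.forall_mem_nil _, rfl⟩
  | primitive p hp => exact ⟨[p], List.forall_mem_singleton.2 hp, rfl⟩
  | comp q r ihq ihr =>
    obtain ⟨L, hL, rfl⟩ := ihq
    obtain ⟨M, hM, rfl⟩ := ihr
    exact ⟨L ++ M, List.forall_mem_append.2 ⟨hL, hM⟩, (composeLoopList_append L M).symm⟩

theorem composeLoopList_injOn_primitive :
    Set.InjOn composeLoopList {L : List (Quiver.Path x x) | ∀ q ∈ L, PrimitiveLoop q} := by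
  intro L hL M hM h
  induction L generalizing M with
  | nil => exact (eq_nil_of_composeLoopList_eq_nil hM h.symm).symm
  | cons p L ih =>
    cases M with
    | nil => exact eq_nil_of_composeLoopList_eq_nil hL h
    | cons q M =>
      rw [Set.mem_ofPred_eq, List.forall_mem_cons] at hL hM
      obtain rfl : p = q := hL.1.eq_of_comp_eq_comp hM.1 h
      rw [ih hL.2 hM.2 (p.comp_injective_right h)]

end Loops

/-- Every loop at `x` admits a unique factorization into primitive loops. -/
theorem unique_primitive_factorization {V : Type u} [Quiver.{v + 1} V] (x : V)
    (p : Quiver.Path x x) :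
    ∃! L : List (Quiver.Path x x),
      (∀ q ∈ L, PrimitiveLoop q) ∧ p = composeLoopList L := by
  obtain ⟨L, hL, hpL⟩ := exists_primitive_factorization p
  exact ⟨L, ⟨hL, hpL⟩, fun M ⟨hM, hpM⟩ => composeLoopList_injOn_primitive hM hL (hpM ▸ hpL)⟩
end

section
/- Let V be a quiver and x a vertex of V, regarded as an object of the path category Paths V (the free category on V, whose morphisms from a to b are the paths from a to b in V, with composition given by concatenation of paths). Then the endomorphism monoid of x in Paths V is isomorphic, as a monoid, to the free monoid on the set of primitive loops at x, i.e. there is a multiplicative isomorphism End(x) ≃* FreeMonoid {p : Quiver.Path x x // p ≠ nil ∧ ∀ q r : Quiver.Path x x, p = q.comp r → q = nil ∨ r = nil}. -/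
universe v u

open CategoryTheory

/-!
A monoid is free as soon as it is equidivisible (Levi's lemma holds in it) and carries a length
homomorphism to `ℕ` that vanishes only at the identity. By induction on the length, every element
is a product of irreducibles. If two such products agree, equidivisibility makes one of their
leading factors a left divisor of the other, so that, both being irreducible, they coincide and can
be removed together with what follows still in agreement. The loops at a vertex, with the number of
arrows as length, form such a monoid, whose irreducible elements are the primitive loops.
-/

section FreeOnIrreducibles

/-- A semigroup is equidivisible if it satisfies the conclusion of Levi's lemma: two factorizations
of the same element always have a common refinement. -/
def IsEquidivisible (M : Type*) [Mul M] : Prop :=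
  ∀ ⦃a b c d : M⦄, a * b = c * d →
    (∃ t, c = a * t ∧ b = t * d) ∨ ∃ t, a = c * t ∧ d = t * b

/-- A gradation of a monoid is a homomorphism to the additive monoid `ℕ` whose kernel contains only
the identity. The target is written multiplicatively, so length `0` reads `1`. -/
def IsGradation {M : Type*} [Monoid M] (ℓ : M →* Multiplicative ℕ) : Prop :=
  ∀ ⦃a : M⦄, ℓ a = 1 → a = 1

variable {M : Type*} [Monoid M]

theorem IsEquidivisible.eq_and_eq_of_irreducible_mul_eq_mul [Subsingleton Mˣ]
    (hM : IsEquidivisible M) {p q a b : M} (hp : Irreducible p) (hq : Irreducible q)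
    (h : p * a = q * b) : p = q ∧ a = b := by
  rcases hM h with ⟨t, rfl, rfl⟩ | ⟨t, rfl, rfl⟩
  · obtain rfl : t = 1 := hq.eq_one_or_eq_one.resolve_left hp.ne_one
    simp
  · obtain rfl : t = 1 := hp.eq_one_or_eq_one.resolve_left hq.ne_one
    simp

theorem irreducible_mul_ne_one [IsDedekindFiniteMonoid M] {p : M} (hp : Irreducible p) (a : M) :
    p * a ≠ 1 :=
  fun h => hp.not_isUnit (.of_mul_eq_one a h)

theorem IsEquidivisible.lift_irreducible_injective [IsDedekindFiniteMonoid M] [Subsingleton Mˣ]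
    (hM : IsEquidivisible M) :
    Function.Injective (FreeMonoid.lift ((↑) : {p : M // Irreducible p} → M)) := by
  intro v w h
  induction v using FreeMonoid.inductionOn' generalizing w with
  | one =>
    cases w using FreeMonoid.casesOn with
    | one => rfl
    | of_mul q w => exact absurd (by simpa using h.symm) (irreducible_mul_ne_one q.2 _)
  | of_mul p v ih =>
    cases w using FreeMonoid.casesOn with
    | one => exact absurd (by simpa using h) (irreducible_mul_ne_one p.2 _)
    | of_mul q w =>
      simp only [map_mul, FreeMonoid.lift_eval_of] at h
      obtain ⟨hpq, hvw⟩ := hM.eq_and_eq_of_irreducible_mul_eq_mul p.2 q.2 h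
      rw [Subtype.ext hpq, ih hvw]

namespace IsGradation

variable {ℓ : M →* Multiplicative ℕ}

theorem eq_one_of_mul_eq_one (hℓ : IsGradation ℓ) {a b : M} (h : a * b = 1) : a = 1 ∧ b = 1 := by
  have : ℓ a * ℓ b = 1 := by rw [← map_mul, h, map_one]
  exact (mul_eq_one.mp this).imp (@hℓ a) (@hℓ b)

theorem isDedekindFiniteMonoid (hℓ : IsGradation ℓ) : IsDedekindFiniteMonoid M where
  mul_eq_one_symm h := by simp [hℓ.eq_one_of_mul_eq_one h]

theorem subsingleton_units (hℓ : IsGradation ℓ) : Subsingleton Mˣ :=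
  subsingleton_of_forall_eq 1 fun u => Units.ext (hℓ.eq_one_of_mul_eq_one u.mul_inv).1

theorem closure_irreducible (hℓ : IsGradation ℓ) :
    Submonoid.closure {p : M | Irreducible p} = ⊤ := by
  have := hℓ.subsingleton_units
  refine (Submonoid.eq_top_iff' _).mpr fun a => ?_
  induction h : (ℓ a).toAdd using Nat.strong_induction_on generalizing a with
  | _ n ih =>
    by_cases ha : IsUnit a
    · simp [isUnit_iff_eq_one.mp ha]
    obtain ha | ⟨b, c, hb, hc, rfl⟩ := irreducible_or_factor ha
    · exact Submonoid.subset_closure ha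
    · have length_pos {d : M} (hd : ¬IsUnit d) : 0 < (ℓ d).toAdd :=
        Nat.pos_of_ne_zero fun h => hd (by simp [hℓ h])
      have length_mul : (ℓ b).toAdd + (ℓ c).toAdd = n := by rw [← toAdd_mul, ← map_mul, h]
      have hb_pos := length_pos hb
      have hc_pos := length_pos hc
      exact mul_mem (ih _ (by lia) b rfl) (ih _ (by lia) c rfl)

theorem lift_irreducible_surjective (hℓ : IsGradation ℓ) :
    Function.Surjective (FreeMonoid.lift ((↑) : {p : M // Irreducible p} → M)) :=
  MonoidHom.mrange_eq_top.mp
    ((Submonoid.closure_eq_mrange {p : M | Irreducible p}).symm.trans hℓ.closure_irreducible)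

/-- Levi's characterization of free monoids: the isomorphism from the free monoid on the
irreducible elements of an equidivisible graded monoid that multiplies out words. -/
noncomputable def freeMonoidIrreducibleMulEquiv (hℓ : IsGradation ℓ) (hM : IsEquidivisible M) :
    FreeMonoid {p : M // Irreducible p} ≃* M :=
  have := hℓ.isDedekindFiniteMonoid
  have := hℓ.subsingleton_units
  .ofBijective (FreeMonoid.lift (↑)) ⟨hM.lift_irreducible_injective, hℓ.lift_irreducible_surjective⟩

end IsGradation

end FreeOnIrreducibles

section Loops

variable {V : Type*} [Quiver V]

theorem exists_refinement_of_path_comp_eq_comp {a b c d : V}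
    {p₁ : Quiver.Path a b} {q₁ : Quiver.Path b d} {p₂ : Quiver.Path a c}
    {q₂ : Quiver.Path c d} (h : p₁.comp q₁ = p₂.comp q₂) :
    (∃ r : Quiver.Path b c, p₂ = p₁.comp r ∧ q₁ = r.comp q₂) ∨
      ∃ r : Quiver.Path c b, p₁ = p₂.comp r ∧ q₂ = r.comp q₁ := by
  induction q₁ with
  | nil => exact .inr ⟨q₂, h, rfl⟩
  | cons q₁ e₁ ih =>
    cases q₂ with
    | nil => exact .inl ⟨q₁.cons e₁, h.symm, rfl⟩
    | cons q₂ e₂ =>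
      simp only [Quiver.Path.comp_cons, Quiver.Path.cons.injEq] at h
      obtain ⟨rfl, h, he⟩ := h
      obtain rfl := he.eq
      rcases ih h.eq with ⟨r, rfl, rfl⟩ | ⟨r, rfl, rfl⟩
      · exact .inl ⟨r, rfl, rfl⟩
      · exact .inr ⟨r, rfl, rfl⟩

/-- The number of arrows, as a homomorphism on the monoid of loops at `x`. -/
def loopLength (x : V) : End ((Paths.of V).obj x) →* Multiplicative ℕ where
  toFun p := .ofAdd (Quiver.Path.length (V := V) p)
  map_one' := rfl
  map_mul' p q := congrArg Multiplicative.ofAdd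
    ((Quiver.Path.length_comp (V := V) q p).trans (add_comm _ _))

theorem isGradation_loopLength (x : V) : IsGradation (loopLength x) :=
  fun p h => Quiver.Path.eq_nil_of_length_zero (V := V) p h

-- `End` multiplies against the order of concatenation, so left and right factors trade places.
theorem isEquidivisible_end_paths (x : V) : IsEquidivisible (End ((Paths.of V).obj x)) := by
  intro a b c d (h : Quiver.Path.comp (V := V) b a = Quiver.Path.comp (V := V) d c)
  rcases exists_refinement_of_path_comp_eq_comp h with ⟨t, hd, ha⟩ | ⟨t, hb, hc⟩
  · exact .inr ⟨t, ha, hd⟩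
  · exact .inl ⟨t, hc, hb⟩

theorem irreducible_end_paths_iff {x : V} (p : End ((Paths.of V).obj x)) :
    Irreducible p ↔ (p : Quiver.Path x x) ≠ Quiver.Path.nil ∧
      ∀ q r : Quiver.Path x x, p = q.comp r → q = Quiver.Path.nil ∨ r = Quiver.Path.nil := by
  have := (isGradation_loopLength x).subsingleton_units
  simp only [irreducible_iff, isUnit_iff_eq_one]
  exact and_congr_right' ⟨fun h q r hp => (h hp).symm, fun h r q hp => (h q r hp).symm⟩

end Loops

/-- The endomorphism monoid of a vertex `x` in the path category `Paths V`
is isomorphic, as a monoid, to the free monoid on the set of primitive loops at `x`. -/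
theorem end_paths_iso_freeMonoid_primitive_loops {V : Type u} [Quiver.{v + 1} V] (x : V) :
    Nonempty
      (End ((Paths.of (V := V)).obj x) ≃*
        FreeMonoid {p : Quiver.Path x x // p ≠ Quiver.Path.nil ∧
          ∀ q r : Quiver.Path x x, p = q.comp r →
            q = Quiver.Path.nil ∨ r = Quiver.Path.nil}) :=
  let loopsFree := (isGradation_loopLength x).freeMonoidIrreducibleMulEquiv
    (isEquidivisible_end_paths x)
  let irreducibleEquivPrimitive := Equiv.subtypeEquivRight (irreducible_end_paths_iff (x := x))
  ⟨loopsFree.symm.trans (FreeMonoid.freeMonoidCongr irreducibleEquivPrimitive)⟩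
end
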